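/- Let n ≥ 2, let q : ℝ^n_+ → ℝ satisfy the cost-function conditions, let c ∈ ℝ^n_+, set α = c_1 + ⋯ + c_n, and let h ∈ L^1_α(ℝ^1_+). Then the operator R^h_q is injective on L^1_{I−c}(ℝ^n_+) (i.e., if f ∈ L^1_{I−c}(ℝ^n_+) and (R^h_q f)(p) = 0 for all p ∈ ℝ^n_+, then f = 0 a.e.) if and only if the set { ξ ∈ ℝ^n : (M e^{−q})(c + iξ) = 0 } is nowhere dense in ℝ^n and the set { τ ∈ ℝ : (Mh)(α + iτ) = 0 } is nowhere dense in ℝ. -/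

import Mathlib

open MeasureTheory Complex Set

noncomputable section

/-- The positive orthant `ℝ^n_+`. -/
def posOrth (n : ℕ) : Set (Fin n → ℝ) := {x | ∀ i, 0 < x i}

/-- `q` satisfies the cost-function conditions: `C¹` on `ℝ^n_+`, positive,
positively homogeneous of degree one, with bounded level sets. -/
def IsCostFun (n : ℕ) (q : (Fin n → ℝ) → ℝ) : Prop :=
  ContDiffOn ℝ 1 q (posOrth n) ∧
  (∀ x ∈ posOrth n, 0 < q x) ∧
  (∀ lam : ℝ, 0 < lam → ∀ x ∈ posOrth n, q (fun i => lam * x i) = lam * q x) ∧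
  (∀ t : ℝ, Bornology.IsBounded {x | x ∈ posOrth n ∧ q x = t})

/-- The `n`-dimensional Mellin transform `(Mg)(z) = ∫_{ℝ^n_+} x^{z-I} g(x) dx`. -/
def mellinT (n : ℕ) (g : (Fin n → ℝ) → ℝ) (z : Fin n → ℂ) : ℂ :=
  ∫ x in posOrth n, (∏ i, (x i : ℂ) ^ (z i - 1)) * g x

/-- Membership in `L¹_c(ℝ^n_+)`: measurable with `∫ |f| x^{c-I} < ∞`. -/
def MemL1w (n : ℕ) (c : Fin n → ℝ) (f : (Fin n → ℝ) → ℝ) : Prop :=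
  IntegrableOn (fun x => f x * ∏ i, x i ^ (c i - 1)) (posOrth n)

/-- Membership in `L¹_α(ℝ¹_+)`: measurable with `∫_0^∞ |h(t)| t^{α-1} dt < ∞`. -/
def MemL1w1 (α : ℝ) (h : ℝ → ℝ) : Prop :=
  IntegrableOn (fun t => h t * t ^ (α - 1)) (Ioi (0 : ℝ))

/-- The operator `(R^h_q f)(p) = ∫_{ℝ^n_+} h(q(p₁x₁,…,pₙxₙ)) f(x) dx`. -/
def Rhq (n : ℕ) (q : (Fin n → ℝ) → ℝ) (h : ℝ → ℝ) (f : (Fin n → ℝ) → ℝ)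
    (p : Fin n → ℝ) : ℝ :=
  ∫ x in posOrth n, h (q (fun i => p i * x i)) * f x

/-!
In logarithmic coordinates `x = e^{-u}`, `p = e^{-w}`, the equation `R^h_q f = 0` says that
`F = x^{I-c} f` is orthogonal to every translate of `G = x^c (h ∘ q)`, i.e. `𝓕 G(ξ) 𝓕 F(-ξ) = 0`.
If the zero set of `𝓕 G` has empty interior, then `𝓕 F = 0` by continuity, hence `F = 0`; otherwise
the Fourier transform of a bump function supported in that zero set is a nonzero solution.

Up to scaling, `𝓕 G(ξ)` is `M(h ∘ q)(c + iξ)`. A dilation of `x` is a translation of `u` along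
`(1, …, 1)` and moves `log q` at unit speed, so by Fubini
`M(h ∘ q)(c + iξ) = Mh(α + i ∑ ξ_k) · K(ξ)` with `K` independent of `h`. For `h(t) = e^{-t}` the
first factor is a value of `Γ`, which has no zeros, so `K` has the same zeros as
`M e^{-q}(c + iξ)`. Hence the zero set of `𝓕 G` is the union of two closed sets, which has empty
interior iff both sets do.
-/

open scoped FourierTransform RealInnerProductSpace NNReal ENNReal Convolution ContDiff

section Topology

variable {X Y : Type*} [TopologicalSpace X] [TopologicalSpace Y]

lemma interior_preimage_eq_empty_iff {f : X → Y} (hf_open : IsOpenMap f) (hf : Continuous f)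
    (hf_surj : Function.Surjective f) {s : Set Y} :
    interior (f ⁻¹' s) = ∅ ↔ interior s = ∅ := by
  rw [← hf_open.preimage_interior_eq_interior_preimage hf, preimage_eq_empty_iff,
    hf_surj.range_eq, disjoint_univ]

lemma interior_union_eq_empty_iff {s t : Set X} (hs : IsClosed s) :
    interior (s ∪ t) = ∅ ↔ interior s = ∅ ∧ interior t = ∅ := by
  refine ⟨fun hst ↦ ⟨?_, ?_⟩, fun ⟨hs0, ht0⟩ ↦ ?_⟩
  · exact subset_empty_iff.1 (hst ▸ interior_mono subset_union_left)
  · exact subset_empty_iff.1 (hst ▸ interior_mono subset_union_right)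
  · rw [interior_union_isClosed_of_interior_empty hs ht0, hs0]

end Topology

section Fourier

variable {V : Type*} [NormedAddCommGroup V] [InnerProductSpace ℝ V] [FiniteDimensional ℝ V]
  [MeasurableSpace V] [BorelSpace V]

lemma continuous_fourier_of_integrable {f : V → ℂ} (hf : Integrable f) : Continuous (𝓕 f) :=
  VectorFourier.fourierIntegral_continuous Real.continuous_fourierChar
    (innerSL ℝ).continuous₂ hf

lemma integral_fourier_mul_eq_integral_mul_fourier {f g : V → ℂ} (hf : Integrable f)
    (hg : Integrable g) : ∫ ξ, 𝓕 f ξ * g ξ = ∫ x, f x * 𝓕 g x := by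
  have := VectorFourier.integral_fourierIntegral_smul_eq_flip (L := innerₗ V)
    Real.continuous_fourierChar continuous_inner hf hg
  rw [flip_innerₗ] at this
  exact this

lemma ae_eq_zero_of_fourier_eq_zero {f : V → ℂ} (hf : Integrable f) (hf0 : ∀ ξ, 𝓕 f ξ = 0) :
    f =ᵐ[volume] 0 := by
  refine ae_eq_zero_of_integral_contDiff_smul_eq_zero hf.locallyIntegrable
    fun g hg hg_supp ↦ ?_
  have hgc_supp : HasCompactSupport (Complex.ofRealCLM ∘ g) := hg_supp.comp_left rfl
  have hgc : ContDiff ℝ ∞ (Complex.ofRealCLM ∘ g) := by fun_prop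
  let φ : SchwartzMap V ℂ := hgc_supp.toSchwartzMap hgc
  let ψ : SchwartzMap V ℂ := 𝓕⁻ φ
  have hψ : 𝓕 (ψ : V → ℂ) = φ := by
    rw [← SchwartzMap.fourier_coe, FourierTransform.fourier_fourierInv_eq]
  calc ∫ x, g x • f x
      = ∫ x, f x * 𝓕 (ψ : V → ℂ) x := by
        rw [hψ]
        exact integral_congr_ae (.of_forall fun x ↦ mul_comm ((g x : ℝ) : ℂ) (f x))
    _ = ∫ ξ, 𝓕 f ξ * ψ ξ :=
        (integral_fourier_mul_eq_integral_mul_fourier hf ψ.integrable).symm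
    _ = 0 := by simp [hf0]

lemma fourier_comp_add_left (f : V → ℂ) (w ξ : V) :
    𝓕 (fun u ↦ f (w + u)) ξ = 𝐞 ⟪w, ξ⟫ • 𝓕 f ξ := by
  simp_rw [add_comm w]
  exact congrFun (VectorFourier.fourierIntegral_comp_add_right _ _ (innerₗ V) f w) ξ

lemma fourier_comp_neg (f : V → ℂ) (ξ : V) : 𝓕 (fun u ↦ f (-u)) ξ = 𝓕 f (-ξ) := by
  rw [← Real.fourierInv_eq_fourier_comp_neg, Real.fourierInv_eq_fourier_neg]

lemma fourier_mul_fourier_neg_eq_zero_of_correlation_eq_zero {G F : V → ℂ} (hG : Integrable G)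
    (hF : Integrable F) (hGF : ∀ w, ∫ u, G (w + u) * F u = 0) (ξ : V) :
    𝓕 G ξ * 𝓕 F (-ξ) = 0 := by
  have hconv : (fun u ↦ F (-u)) ⋆[ContinuousLinearMap.mul ℂ ℂ] G = 0 := by
    ext w
    rw [convolution_def, ← integral_neg_eq_self, Pi.zero_apply, ← hGF w]
    simp only [neg_neg, sub_neg_eq_add, ContinuousLinearMap.mul_apply', mul_comm]
  have hmul := Real.fourier_mul_convolution_eq hF.comp_neg hG ξ
  rw [hconv, fourier_comp_neg] at hmul
  rw [mul_comm, ← hmul]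
  simp [Real.fourier_eq]

lemma ae_eq_zero_of_correlation_eq_zero {G F : V → ℂ} (hG : Integrable G) (hF : Integrable F)
    (hG0 : interior {ξ | 𝓕 G ξ = 0} = ∅) (hGF : ∀ w, ∫ u, G (w + u) * F u = 0) :
    F =ᵐ[volume] 0 := by
  have hF0 : (fun ξ ↦ 𝓕 F (-ξ)) = fun _ ↦ 0 :=
    ((continuous_fourier_of_integrable hF).comp continuous_neg).ext_on
      (interior_eq_empty_iff_dense_compl.1 hG0) continuous_const fun ξ hξ ↦
        (mul_eq_zero.1 (fourier_mul_fourier_neg_eq_zero_of_correlation_eq_zero hG hF hGF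
          ξ)).resolve_left hξ
  exact ae_eq_zero_of_fourier_eq_zero hF fun ξ ↦ by simpa using congrFun hF0 (-ξ)

/- Any `𝓕 φ` with `φ` supported in the zero set of `𝓕 G` is orthogonal to all translates of `G`,
because `𝓕` moves across the pairing and translation only changes `𝓕 G` by a phase. -/
lemma exists_schwartzMap_correlation_eq_zero {G : V → ℂ} (hG : Integrable G)
    (hG0 : (interior {ξ | 𝓕 G ξ = 0}).Nonempty) :
    ∃ Φ : SchwartzMap V ℂ, Φ ≠ 0 ∧ ∀ w, ∫ u, G (w + u) * Φ u = 0 := by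
  obtain ⟨ξ₀, hξ₀⟩ := hG0
  obtain ⟨g, hg_supp, hg_compact, hg, -, hgξ₀⟩ :=
    exists_contDiff_tsupport_subset (n := ⊤) (mem_interior_iff_mem_nhds.1 hξ₀)
  have hgc_compact : HasCompactSupport (Complex.ofRealCLM ∘ g) := hg_compact.comp_left rfl
  have hgc : ContDiff ℝ ∞ (Complex.ofRealCLM ∘ g) := by fun_prop
  let φ : SchwartzMap V ℂ := hgc_compact.toSchwartzMap hgc
  have hφ : φ ≠ 0 := fun h0 ↦ by
    have : ((g ξ₀ : ℝ) : ℂ) = 0 := congrArg (fun ψ : SchwartzMap V ℂ ↦ ψ ξ₀) h0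
    simp [hgξ₀] at this
  refine ⟨𝓕 φ, fun h0 ↦ hφ ?_, fun w ↦ ?_⟩
  · rw [← FourierTransform.fourierInv_fourier_eq (F := SchwartzMap V ℂ) φ, h0,
      FourierTransform.fourierInv_zero]
  · rw [SchwartzMap.fourier_coe,
      ← integral_fourier_mul_eq_integral_mul_fourier (hG.comp_add_left w) φ.integrable]
    refine integral_eq_zero_of_ae (.of_forall fun ξ ↦ ?_)
    by_cases hξ : g ξ = 0
    · have hφξ : φ ξ = 0 := congrArg Complex.ofReal hξ
      simp [hφξ]
    · have hGξ : 𝓕 G ξ = 0 := hg_supp (subset_tsupport g hξ)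
      simp [fourier_comp_add_left, hGξ]

theorem correlation_injective_iff {G : V → ℝ} (hG : Integrable G) :
    (∀ F : V → ℝ, Integrable F → (∀ w, ∫ u, G (w + u) * F u = 0) → F =ᵐ[volume] 0) ↔
      interior {ξ | 𝓕 (fun u ↦ (G u : ℂ)) ξ = 0} = ∅ := by
  constructor
  · intro hinj
    by_contra hne
    obtain ⟨Φ, hΦ, hGΦ⟩ := exists_schwartzMap_correlation_eq_zero
      (G := fun u ↦ (G u : ℂ)) hG.ofReal (nonempty_iff_ne_empty.2 hne)
    have hint (w : V) : Integrable fun u ↦ (G (w + u) : ℂ) * Φ u :=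
      (hG.comp_add_left w).ofReal.mul_bdd Φ.continuous.aestronglyMeasurable
        (.of_forall fun u ↦ SchwartzMap.norm_le_seminorm ℝ Φ u)
    have hre := hinj (fun u ↦ (Φ u).re) Φ.integrable.re fun w ↦ by
      have hre_comm := reCLM.integral_comp_comm (hint w)
      rw [hGΦ w] at hre_comm
      simpa using hre_comm
    have him := hinj (fun u ↦ (Φ u).im) Φ.integrable.im fun w ↦ by
      have him_comm := imCLM.integral_comp_comm (hint w)
      rw [hGΦ w] at him_comm
      simpa using him_comm
    have hΦ0 : Φ =ᵐ[volume] fun _ ↦ (0 : ℂ) := by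
      filter_upwards [hre, him] with u hu_re hu_im using Complex.ext hu_re hu_im
    exact hΦ (DFunLike.coe_injective
      ((Φ.continuous.ae_eq_iff_eq volume continuous_const).1 hΦ0))
  · intro hG0 F hF hGF
    have hGFc (w : V) : ∫ u, (G (w + u) : ℂ) * F u = 0 := by
      simp_rw [← Complex.ofReal_mul]
      rw [integral_complex_ofReal, hGF w, Complex.ofReal_zero]
    have hF0 := ae_eq_zero_of_correlation_eq_zero (G := fun u ↦ (G u : ℂ)) hG.ofReal hF.ofReal
      hG0 hGFc
    filter_upwards [hF0] with u hu using Complex.ofReal_eq_zero.1 hu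

end Fourier

lemma measurePreserving_withDensity_comp {X Y : Type*} [MeasurableSpace X] [MeasurableSpace Y]
    {μ : Measure X} {ν : Measure Y} {T : X → Y} (hT : MeasurePreserving T μ ν) {W : Y → ℝ≥0∞}
    (hW : Measurable W) : MeasurePreserving T (μ.withDensity (W ∘ T)) (ν.withDensity W) := by
  refine ⟨hT.measurable, Measure.ext fun s hs ↦ ?_⟩
  rw [Measure.map_apply hT.measurable hs, withDensity_apply _ (hT.measurable hs),
    withDensity_apply _ hs, ← hT.setLIntegral_comp_preimage hs hW]
  rfl

section SliceDecomposition

variable {V : Type*} [AddCommGroup V] [Module ℝ V]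

/-- The projection onto the slice `Q = 0` along the direction `a`, for a function `Q` that
increases at unit speed in the direction `a`. -/
def sliceProj (Q : V → ℝ) (a u : V) : V := u + -Q u • a

variable {Q : V → ℝ} {a : V}

lemma sliceProj_add_smul (hQa : ∀ u t, Q (u + t • a) = Q u + t) (u : V) (t : ℝ) :
    sliceProj Q a (u + t • a) = sliceProj Q a u := by
  rw [sliceProj, sliceProj, hQa]
  module

lemma sliceProj_add_smul_self (Q : V → ℝ) (a u : V) : sliceProj Q a u + Q u • a = u := by
  rw [sliceProj]
  module

variable [MeasurableSpace V]

/-- `Q` is a height function increasing at unit speed along `a`, and `W` is a weight constant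
along `a`. -/
structure IsWeightedSlicing (Q : V → ℝ) (W : V → ℝ≥0) (a : V) : Prop where
  measurable_height : Measurable Q
  height_add_smul (u : V) (t : ℝ) : Q (u + t • a) = Q u + t
  measurable_weight : Measurable W
  weight_add_smul (u : V) (t : ℝ) : W (u + t • a) = W u

/-- The measure on the slice `Q = 0` obtained by projecting the slab `0 ≤ Q < 1` along `a`. -/
def sliceMeasure (m : Measure V) (Q : V → ℝ) (a : V) : Measure V :=
  (m.restrict (Q ⁻¹' Ico 0 1)).map (sliceProj Q a)

variable {m : Measure V}

instance [SFinite m] : SFinite (sliceMeasure m Q a) := by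
  unfold sliceMeasure
  infer_instance

variable [MeasurableAdd₂ V] [MeasurableSMul ℝ V]

lemma measurable_sliceProj (hQ : Measurable Q) (a : V) : Measurable (sliceProj Q a) :=
  measurable_id.add (hQ.neg.smul_const a)

lemma lintegral_indicator_Ico_add (s : ℝ) :
    ∫⁻ t : ℝ, (Ico (0 : ℝ) 1).indicator 1 (s + t) = 1 := by
  rw [lintegral_add_left_eq_self, lintegral_indicator_one measurableSet_Ico]
  simp

/- Insert `1 = ∫ 1_{[0,1)}(Q u + t) dt`, exchange the integrals, and translate `u` by `t • a`. -/
lemma lintegral_comp_slice [SFinite m] (hQ : Measurable Q)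
    (hQa : ∀ u t, Q (u + t • a) = Q u + t) (hma : ∀ t : ℝ, MeasurePreserving (· + t • a) m m)
    {F : ℝ × V → ℝ≥0∞} (hF : Measurable F) :
    ∫⁻ u, F (Q u, sliceProj Q a u) ∂m =
      ∫⁻ u in Q ⁻¹' Ico 0 1, (∫⁻ t, F (t, sliceProj Q a u)) ∂m := by
  let χ : ℝ → ℝ≥0∞ := (Ico (0 : ℝ) 1).indicator 1
  have hχ : Measurable χ := measurable_one.indicator measurableSet_Ico
  have hP := measurable_sliceProj hQ a
  calc ∫⁻ u, F (Q u, sliceProj Q a u) ∂m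
      = ∫⁻ u, (∫⁻ t, χ (Q u + t) * F (Q u, sliceProj Q a u)) ∂m := by
        refine lintegral_congr fun u ↦ ?_
        rw [lintegral_mul_const _ (by fun_prop), lintegral_indicator_Ico_add, one_mul]
    _ = ∫⁻ t, ∫⁻ u, χ (Q u + t) * F (Q u, sliceProj Q a u) ∂m :=
        lintegral_lintegral_swap (by fun_prop)
    _ = ∫⁻ t, ∫⁻ u, χ (Q u) * F (Q u - t, sliceProj Q a u) ∂m := by
        refine lintegral_congr fun t ↦ ?_
        rw [← (hma t).lintegral_comp (f := fun u ↦ χ (Q u) * F (Q u - t, sliceProj Q a u))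
          (by fun_prop)]
        simp only [hQa, sliceProj_add_smul hQa, add_sub_cancel_right]
    _ = ∫⁻ u, (∫⁻ t, χ (Q u) * F (Q u - t, sliceProj Q a u)) ∂m :=
        lintegral_lintegral_swap (by fun_prop)
    _ = ∫⁻ u, (Q ⁻¹' Ico 0 1).indicator (fun u ↦ ∫⁻ t, F (t, sliceProj Q a u)) u ∂m := by
        refine lintegral_congr fun u ↦ ?_
        rw [lintegral_const_mul _ (by fun_prop),
          lintegral_sub_left_eq_self (fun t ↦ F (t, sliceProj Q a u)) (Q u)]
        by_cases hu : Q u ∈ Ico (0 : ℝ) 1 <;> simp [χ, indicator, hu]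
    _ = ∫⁻ u in Q ⁻¹' Ico 0 1, (∫⁻ t, F (t, sliceProj Q a u)) ∂m :=
        lintegral_indicator (hQ measurableSet_Ico) _

theorem map_slice_eq_volume_prod [SFinite m] (hQ : Measurable Q)
    (hQa : ∀ u t, Q (u + t • a) = Q u + t)
    (hma : ∀ t : ℝ, MeasurePreserving (· + t • a) m m) :
    m.map (fun u ↦ (Q u, sliceProj Q a u)) = volume.prod (sliceMeasure m Q a) := by
  have hP := measurable_sliceProj hQ a
  refine Measure.ext_of_lintegral _ fun F hF ↦ ?_
  rw [lintegral_map hF (hQ.prodMk hP), lintegral_comp_slice hQ hQa hma hF,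
    lintegral_prod_symm' _ hF, sliceMeasure,
    lintegral_map (by fun_prop) hP]

end SliceDecomposition

section WeightedSlice

variable {V : Type*} [NormedAddCommGroup V] [InnerProductSpace ℝ V] [FiniteDimensional ℝ V]
  [MeasurableSpace V] [BorelSpace V]

/-- The slice measure of Lebesgue measure weighted by `W`. -/
abbrev weightedSliceMeasure (Q : V → ℝ) (W : V → ℝ≥0) (a : V) : Measure V :=
  sliceMeasure (volume.withDensity fun u ↦ (W u : ℝ≥0∞)) Q a

variable {Q : V → ℝ} {W : V → ℝ≥0} {a : V}

namespace IsWeightedSlicing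

lemma map_withDensity_eq_prod (hQW : IsWeightedSlicing Q W a) :
    (volume.withDensity fun u ↦ (W u : ℝ≥0∞)).map (fun u ↦ (Q u, sliceProj Q a u)) =
      volume.prod (weightedSliceMeasure Q W a) :=
  map_slice_eq_volume_prod hQW.measurable_height hQW.height_add_smul fun t ↦ by
    simpa only [Function.comp_def, hQW.weight_add_smul] using
      measurePreserving_withDensity_comp (measurePreserving_add_right volume (t • a))
        hQW.measurable_weight.coe_nnreal_ennreal

lemma aemeasurable_slice (hQW : IsWeightedSlicing Q W a) {μ : Measure V} :
    AEMeasurable (fun u ↦ (Q u, sliceProj Q a u)) μ :=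
  (hQW.measurable_height.prodMk (measurable_sliceProj hQW.measurable_height a)).aemeasurable

lemma integrable_smul_comp_iff (hQW : IsWeightedSlicing Q W a) {k : ℝ → ℂ}
    (hk : AEStronglyMeasurable k) :
    Integrable (fun u ↦ W u • k (Q u)) ↔
      Integrable (fun z : ℝ × V ↦ k z.1) (volume.prod (weightedSliceMeasure Q W a)) := by
  rw [← hQW.map_withDensity_eq_prod, integrable_map_measure _ hQW.aemeasurable_slice,
    ← integrable_withDensity_iff_integrable_smul hQW.measurable_weight]
  · rfl
  · rw [hQW.map_withDensity_eq_prod]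
    exact hk.comp_fst

lemma isFiniteMeasure (hQW : IsWeightedSlicing Q W a) {e : ℝ → ℂ} (he : AEStronglyMeasurable e)
    (he0 : ∀ s, e s ≠ 0) (hWe : Integrable fun u ↦ W u • e (Q u)) :
    IsFiniteMeasure (weightedSliceMeasure Q W a) := by
  obtain ⟨s, hs⟩ := ((hQW.integrable_smul_comp_iff he).1 hWe).prod_right_ae.exists
  exact (integrable_const_iff.1 hs).resolve_left (he0 s)

lemma integrable_smul_comp (hQW : IsWeightedSlicing Q W a)
    [IsFiniteMeasure (weightedSliceMeasure Q W a)] {k : ℝ → ℂ} (hk : Integrable k) :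
    Integrable fun u ↦ W u • k (Q u) :=
  (hQW.integrable_smul_comp_iff hk.aestronglyMeasurable).2 (hk.comp_fst _)

lemma fourier_smul_comp (hQW : IsWeightedSlicing Q W a) {k : ℝ → ℂ}
    (hk : AEStronglyMeasurable k) (ξ : V) :
    𝓕 (fun u ↦ W u • k (Q u)) ξ =
      𝓕 k ⟪a, ξ⟫ * ∫ v, 𝐞 (-⟪v, ξ⟫) • (1 : ℂ) ∂weightedSliceMeasure Q W a := by
  have hinner (u : V) : ⟪u, ξ⟫ = Q u * ⟪a, ξ⟫ + ⟪sliceProj Q a u, ξ⟫ := by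
    rw [← real_inner_smul_left, ← inner_add_left, add_comm, sliceProj_add_smul_self]
  have hkernel (s : ℝ) (v : V) : 𝐞 (-(s * ⟪a, ξ⟫ + ⟪v, ξ⟫)) • k s =
      𝐞 (-(s * ⟪a, ξ⟫)) • k s * 𝐞 (-⟪v, ξ⟫) • (1 : ℂ) := by
    simp only [neg_add, AddChar.map_add_eq_mul, Circle.smul_def, Circle.coe_mul, smul_eq_mul,
      mul_one]
    ring
  calc 𝓕 (fun u ↦ W u • k (Q u)) ξ
      = ∫ u, W u • 𝐞 (-(Q u * ⟪a, ξ⟫ + ⟪sliceProj Q a u, ξ⟫)) • k (Q u) := by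
        simp only [Real.fourier_eq, ← hinner, smul_comm (W _)]
    _ = ∫ u, 𝐞 (-(Q u * ⟪a, ξ⟫ + ⟪sliceProj Q a u, ξ⟫)) • k (Q u)
          ∂(volume.withDensity fun u ↦ (W u : ℝ≥0∞)) :=
        (integral_withDensity_eq_integral_smul hQW.measurable_weight _).symm
    _ = ∫ z : ℝ × V, 𝐞 (-(z.1 * ⟪a, ξ⟫ + ⟪z.2, ξ⟫)) • k z.1
          ∂volume.prod (weightedSliceMeasure Q W a) := by
        rw [← hQW.map_withDensity_eq_prod, integral_map hQW.aemeasurable_slice]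
        rw [hQW.map_withDensity_eq_prod]
        have hphase : Continuous fun z : ℝ × V ↦ 𝐞 (-(z.1 * ⟪a, ξ⟫ + ⟪z.2, ξ⟫)) := by fun_prop
        exact hphase.aestronglyMeasurable.smul hk.comp_fst
    _ = 𝓕 k ⟪a, ξ⟫ * ∫ v, 𝐞 (-⟪v, ξ⟫) • (1 : ℂ) ∂weightedSliceMeasure Q W a := by
        simp only [hkernel]
        rw [integral_prod_mul (fun s ↦ 𝐞 (-(s * ⟪a, ξ⟫)) • k s) fun v ↦ 𝐞 (-⟪v, ξ⟫) • (1 : ℂ),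
          Real.fourier_real_eq]

end IsWeightedSlicing

end WeightedSlice

section LogCoordinates

variable {n : ℕ}

/-- Logarithmic coordinates `x = e^{-u}` on the positive orthant; the sign matches
`mellin_eq_fourier`. -/
def expNeg (u : EuclideanSpace ℝ (Fin n)) : Fin n → ℝ := fun i ↦ Real.exp (-u i)

/-- The inverse of `expNeg` on the positive orthant. -/
def negLog (x : Fin n → ℝ) : EuclideanSpace ℝ (Fin n) := WithLp.toLp 2 fun i ↦ -Real.log (x i)

lemma expNeg_mem_posOrth (u : EuclideanSpace ℝ (Fin n)) : expNeg u ∈ posOrth n :=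
  fun _ ↦ Real.exp_pos _

lemma expNeg_add (u v : EuclideanSpace ℝ (Fin n)) : expNeg (u + v) = expNeg u * expNeg v := by
  ext i
  simp [expNeg, Real.exp_add, mul_comm]

lemma expNeg_negLog {x : Fin n → ℝ} (hx : x ∈ posOrth n) : expNeg (negLog x) = x := by
  ext i
  simp [expNeg, negLog, Real.exp_log (hx i)]

lemma negLog_expNeg (u : EuclideanSpace ℝ (Fin n)) : negLog (expNeg u) = u := by
  ext i
  simp [expNeg, negLog]

lemma measurableEmbedding_expNeg : MeasurableEmbedding (expNeg (n := n)) := by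
  have hcont : Continuous (expNeg (n := n)) := by unfold expNeg; fun_prop
  exact hcont.measurableEmbedding (Function.LeftInverse.injective (g := negLog) negLog_expNeg)

lemma prod_expNeg_rpow (u : EuclideanSpace ℝ (Fin n)) (c : Fin n → ℝ) :
    ∏ i, expNeg u i ^ c i = Real.exp (-∑ i, c i * u i) := by
  simp_rw [expNeg, ← Real.exp_mul, ← Real.exp_sum, ← Finset.sum_neg_distrib, neg_mul, mul_comm]

lemma prod_expNeg_cpow (u : EuclideanSpace ℝ (Fin n)) (z : Fin n → ℂ) :
    ∏ i, (expNeg u i : ℂ) ^ z i = cexp (-∑ i, z i * u i) := by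
  rw [← Finset.sum_neg_distrib, Complex.exp_sum]
  refine Finset.prod_congr rfl fun i _ ↦ ?_
  rw [Complex.cpow_def_of_ne_zero (by simp [expNeg]),
    ← Complex.ofReal_log (expNeg_mem_posOrth u i).le]
  simp [expNeg, mul_comm]

lemma range_exp_neg : range (fun (w : Fin n → ℝ) i ↦ Real.exp (-w i)) = posOrth n := by
  ext x
  refine ⟨?_, fun hx ↦ ⟨fun i ↦ -Real.log (x i), expNeg_negLog hx⟩⟩
  rintro ⟨w, rfl⟩ i
  exact Real.exp_pos _

lemma map_exp_neg_withDensity :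
    (volume.withDensity fun w : Fin n → ℝ ↦ ENNReal.ofReal (Real.exp (-∑ i, w i))).map
      (fun w i ↦ Real.exp (-w i)) = volume.restrict (posOrth n) := by
  let D (w : Fin n → ℝ) : (Fin n → ℝ) →L[ℝ] (Fin n → ℝ) := ContinuousLinearMap.pi fun i ↦
    (ContinuousLinearMap.toSpanSingleton ℝ (-Real.exp (-w i))).comp (.proj i)
  have hD (w : Fin n → ℝ) : HasFDerivAt (fun (w : Fin n → ℝ) i ↦ Real.exp (-w i)) (D w) w := by
    refine hasFDerivAt_pi.2 fun i ↦ ?_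
    have hderiv : HasDerivAt (fun t : ℝ ↦ Real.exp (-t)) (-Real.exp (-w i)) (w i) := by
      simpa using (hasDerivAt_neg (w i)).exp
    exact hderiv.hasFDerivAt.comp (f := fun w : Fin n → ℝ ↦ w i) w (hasFDerivAt_apply i w)
  have hdet (w : Fin n → ℝ) : |(D w).det| = Real.exp (-∑ i, w i) := by
    simp only [D, ContinuousLinearMap.det_pi, ContinuousLinearMap.det_toSpanSingleton,
      Finset.abs_prod, abs_neg, Real.abs_exp, ← Real.exp_sum, Finset.sum_neg_distrib]
  have hinj : Function.Injective fun (w : Fin n → ℝ) i ↦ Real.exp (-w i) := fun w w' hww' ↦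
    funext fun i ↦ neg_injective (Real.exp_injective (congrFun hww' i))
  have hmap := map_withDensity_abs_det_fderiv_eq_addHaar volume nullMeasurableSet_univ
    (fun w _ ↦ (hD w).hasFDerivWithinAt) hinj.injOn
  simpa only [hdet, Measure.restrict_univ, image_univ, range_exp_neg] using hmap

lemma map_expNeg_withDensity :
    (volume.withDensity fun u : EuclideanSpace ℝ (Fin n) ↦
      ENNReal.ofReal (Real.exp (-∑ i, u i))).map expNeg = volume.restrict (posOrth n) := by
  have hofLp := measurePreserving_withDensity_comp (PiLp.volume_preserving_ofLp (Fin n))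
    (W := fun w ↦ ENNReal.ofReal (Real.exp (-∑ i, w i))) (by fun_prop)
  rw [← map_exp_neg_withDensity, ← hofLp.map_eq, Measure.map_map (by fun_prop) hofLp.measurable]
  rfl

lemma integral_posOrth {E : Type*} [NormedAddCommGroup E] [NormedSpace ℝ E]
    (g : (Fin n → ℝ) → E) :
    ∫ x in posOrth n, g x =
      ∫ u : EuclideanSpace ℝ (Fin n), Real.exp (-∑ i, u i) • g (expNeg u) := by
  rw [← map_expNeg_withDensity, measurableEmbedding_expNeg.integral_map,
    integral_withDensity_eq_integral_toReal_smul (by fun_prop)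
      (.of_forall fun _ ↦ ENNReal.ofReal_lt_top)]
  simp only [ENNReal.toReal_ofReal (Real.exp_nonneg _)]

lemma integrableOn_posOrth_iff {E : Type*} [NormedAddCommGroup E] [NormedSpace ℝ E]
    {g : (Fin n → ℝ) → E} :
    IntegrableOn g (posOrth n) ↔ Integrable fun u : EuclideanSpace ℝ (Fin n) ↦
      Real.exp (-∑ i, u i) • g (expNeg u) := by
  rw [IntegrableOn, ← map_expNeg_withDensity, measurableEmbedding_expNeg.integrable_map_iff,
    integrable_withDensity_iff_integrable_smul' (by fun_prop)
      (.of_forall fun _ ↦ ENNReal.ofReal_lt_top)]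
  simp only [ENNReal.toReal_ofReal (Real.exp_nonneg _), Function.comp_apply]

lemma ae_restrict_posOrth_iff {p : (Fin n → ℝ) → Prop} :
    (∀ᵐ x ∂volume.restrict (posOrth n), p x) ↔
      ∀ᵐ u : EuclideanSpace ℝ (Fin n), p (expNeg u) := by
  rw [← map_expNeg_withDensity, measurableEmbedding_expNeg.ae_map_iff,
    ae_withDensity_iff (by fun_prop)]
  simp [Real.exp_pos]

end LogCoordinates

section LogPullback

variable {n : ℕ}

/-- The function `f` on the positive orthant, weighted by `x^c`, in logarithmic coordinates. -/
def logPullback (c : Fin n → ℝ) (f : (Fin n → ℝ) → ℝ) (u : EuclideanSpace ℝ (Fin n)) : ℝ :=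
  Real.exp (-∑ i, c i * u i) * f (expNeg u)

lemma logPullback_surjective (c : Fin n → ℝ) : Function.Surjective (logPullback c) := by
  refine fun F ↦ ⟨fun x ↦ Real.exp (∑ i, c i * negLog x i) * F (negLog x), funext fun u ↦ ?_⟩
  rw [logPullback, negLog_expNeg, ← mul_assoc, ← Real.exp_add, neg_add_cancel, Real.exp_zero,
    one_mul]

lemma memL1w_iff_integrable_logPullback {c : Fin n → ℝ} {f : (Fin n → ℝ) → ℝ} :
    MemL1w n c f ↔ Integrable (logPullback c f) := by
  rw [MemL1w, integrableOn_posOrth_iff]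
  refine integrable_congr (.of_forall fun u ↦ ?_)
  have hexp : -∑ i, u i + -∑ i, (c i - 1) * u i = -∑ i, c i * u i := by
    simp only [sub_mul, one_mul, Finset.sum_sub_distrib]
    ring
  simp only [prod_expNeg_rpow, logPullback, smul_eq_mul, ← hexp, Real.exp_add]
  ring

lemma ae_restrict_posOrth_eq_zero_iff (c : Fin n → ℝ) {f : (Fin n → ℝ) → ℝ} :
    (∀ᵐ x ∂volume.restrict (posOrth n), f x = 0) ↔ logPullback c f =ᵐ[volume] 0 := by
  rw [ae_restrict_posOrth_iff]
  simp only [Filter.EventuallyEq, logPullback, Pi.zero_apply, mul_eq_zero, Real.exp_ne_zero,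
    false_or]

lemma mellinT_eq_fourier (c ξ : Fin n → ℝ) (g : (Fin n → ℝ) → ℝ) :
    mellinT n g (fun i ↦ (c i : ℂ) + I * (ξ i : ℂ)) =
      𝓕 (fun u ↦ (logPullback c g u : ℂ)) ((2 * Real.pi)⁻¹ • WithLp.toLp 2 ξ) := by
  rw [mellinT, integral_posOrth, Real.fourier_eq']
  refine integral_congr_ae (.of_forall fun u ↦ ?_)
  have hphase : -2 * Real.pi * ⟪u, (2 * Real.pi)⁻¹ • WithLp.toLp 2 ξ⟫ = -∑ i, ξ i * u i := by
    rw [real_inner_smul_right, PiLp.inner_apply]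
    simp only [RCLike.inner_apply, conj_trivial]
    field_simp
  have hexp : -∑ i, (u i : ℂ) + -∑ i, ((c i : ℂ) + I * ξ i - 1) * u i =
      ((-∑ i, ξ i * u i : ℝ) : ℂ) * I + ((-∑ i, c i * u i : ℝ) : ℂ) := by
    push_cast
    simp only [sub_mul, add_mul, one_mul, Finset.sum_sub_distrib, Finset.sum_add_distrib,
      mul_assoc, ← Finset.mul_sum]
    ring
  simp only [prod_expNeg_cpow, logPullback, real_smul, smul_eq_mul, hphase, ofReal_mul, ofReal_exp,
    ← mul_assoc, ← Complex.exp_add]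
  rw [← hexp]
  push_cast
  rfl

lemma continuous_mellinT {c : Fin n → ℝ} {g : (Fin n → ℝ) → ℝ} (hg : MemL1w n c g) :
    Continuous fun ξ : Fin n → ℝ ↦ mellinT n g (fun i ↦ (c i : ℂ) + I * (ξ i : ℂ)) := by
  simp only [mellinT_eq_fourier]
  have hF := continuous_fourier_of_integrable (f := fun u ↦ (logPullback c g u : ℂ))
    (memL1w_iff_integrable_logPullback.1 hg).ofReal
  fun_prop

lemma interior_mellinT_eq_zero_eq_empty_iff (c : Fin n → ℝ) (g : (Fin n → ℝ) → ℝ) :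
    interior {ξ : Fin n → ℝ | mellinT n g (fun i ↦ (c i : ℂ) + I * (ξ i : ℂ)) = 0} = ∅ ↔
      interior {ξ | 𝓕 (fun u ↦ (logPullback c g u : ℂ)) ξ = 0} = ∅ := by
  let e : (Fin n → ℝ) ≃ₜ EuclideanSpace ℝ (Fin n) :=
    (EuclideanSpace.equiv (Fin n) ℝ).symm.toHomeomorph.trans
      (Homeomorph.smulOfNeZero (2 * Real.pi)⁻¹ (by positivity))
  have hpre : {ξ : Fin n → ℝ | mellinT n g (fun i ↦ (c i : ℂ) + I * (ξ i : ℂ)) = 0} =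
      e ⁻¹' {ξ | 𝓕 (fun u ↦ (logPullback c g u : ℂ)) ξ = 0} := by
    simp only [mellinT_eq_fourier]
    rfl
  rw [hpre, interior_preimage_eq_empty_iff e.isOpenMap e.continuous e.surjective]

lemma integral_posOrth_dilation_mul (c : Fin n → ℝ) (k f : (Fin n → ℝ) → ℝ)
    (w : EuclideanSpace ℝ (Fin n)) :
    ∫ x in posOrth n, k (fun i ↦ expNeg w i * x i) * f x = Real.exp (∑ i, c i * w i) *
      ∫ u, logPullback c k (w + u) * logPullback (fun i ↦ 1 - c i) f u := by
  rw [integral_posOrth, ← integral_const_mul]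
  refine integral_congr_ae (.of_forall fun u ↦ ?_)
  have hexp : -∑ i, u i =
      ∑ i, c i * w i + (-∑ i, c i * (w + u) i + -∑ i, (1 - c i) * u i) := by
    simp only [PiLp.add_apply, mul_add, sub_mul, one_mul, Finset.sum_add_distrib,
      Finset.sum_sub_distrib]
    ring
  have hk : k (fun i ↦ expNeg w i * expNeg u i) = k (expNeg (w + u)) := by
    rw [expNeg_add]
    rfl
  simp only [logPullback, smul_eq_mul, hk, hexp, Real.exp_add]
  ring

theorem dilation_injective_iff {c : Fin n → ℝ} {k : (Fin n → ℝ) → ℝ} (hk : MemL1w n c k) :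
    (∀ f : (Fin n → ℝ) → ℝ, MemL1w n (fun i ↦ 1 - c i) f →
        (∀ p ∈ posOrth n, ∫ x in posOrth n, k (fun i ↦ p i * x i) * f x = 0) →
        ∀ᵐ x ∂(volume.restrict (posOrth n)), f x = 0) ↔
      interior {ξ : Fin n → ℝ | mellinT n k (fun i ↦ (c i : ℂ) + I * (ξ i : ℂ)) = 0} = ∅ := by
  have horth (f : (Fin n → ℝ) → ℝ) :
      (∀ p ∈ posOrth n, ∫ x in posOrth n, k (fun i ↦ p i * x i) * f x = 0) ↔
        ∀ w, ∫ u, logPullback c k (w + u) * logPullback (fun i ↦ 1 - c i) f u = 0 := by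
    refine ⟨fun hp w ↦ ?_, fun hw p hp ↦ ?_⟩
    · have hpw := hp _ (expNeg_mem_posOrth w)
      rw [integral_posOrth_dilation_mul c] at hpw
      exact (mul_eq_zero.1 hpw).resolve_left (Real.exp_ne_zero _)
    · rw [← expNeg_negLog hp, integral_posOrth_dilation_mul c, hw, mul_zero]
  rw [interior_mellinT_eq_zero_eq_empty_iff,
    ← correlation_injective_iff (memL1w_iff_integrable_logPullback.1 hk),
    (logPullback_surjective fun i ↦ 1 - c i).forall]
  simp only [memL1w_iff_integrable_logPullback, horth,
    ae_restrict_posOrth_eq_zero_iff fun i ↦ 1 - c i]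

end LogPullback

section OneDim

/-- The one-dimensional, complex-valued analogue of `logPullback`: the function `h` on `(0, ∞)`,
weighted by `t^α`, in the coordinate `t = e^{-s}`. -/
def logPullbackReal (α : ℝ) (h : ℝ → ℝ) (s : ℝ) : ℂ :=
  Real.exp (-α * s) • (h (Real.exp (-s)) : ℂ)

lemma mellin_eq_fourier_logPullbackReal (α : ℝ) (h : ℝ → ℝ) (τ : ℝ) :
    mellin (fun t ↦ (h t : ℂ)) ((α : ℂ) + I * (τ : ℂ)) =
      𝓕 (logPullbackReal α h) (τ / (2 * Real.pi)) := by
  rw [mellin_eq_fourier]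
  simp only [add_re, ofReal_re, mul_re, I_re, I_im, ofReal_im, add_im, mul_im, zero_mul, one_mul,
    mul_zero, sub_zero, add_zero, zero_add]
  rfl

lemma integrable_logPullbackReal {α : ℝ} {h : ℝ → ℝ} (hh : MemL1w1 α h) :
    Integrable (logPullbackReal α h) := by
  have hderiv (s : ℝ) : HasDerivWithinAt (fun s : ℝ ↦ Real.exp (-s)) (-Real.exp (-s)) univ s := by
    simpa [hasDerivWithinAt_univ] using (hasDerivAt_neg s).exp
  have himage : (fun s : ℝ ↦ Real.exp (-s)) '' univ = Ioi 0 := by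
    rw [image_univ]
    exact (neg_surjective.range_comp Real.exp).trans Real.range_exp
  rw [MemL1w1, ← himage, integrableOn_image_iff_integrableOn_abs_deriv_smul MeasurableSet.univ
    (fun s _ ↦ hderiv s) (Real.exp_injective.comp neg_injective).injOn, integrableOn_univ] at hh
  refine hh.ofReal.congr (.of_forall fun s ↦ ?_)
  have hexp : -α * s = -s + -s * (α - 1) := by ring
  simp only [logPullbackReal, abs_neg, Real.abs_exp, smul_eq_mul, ← Real.exp_mul, hexp,
    Real.exp_add, real_smul, coe_algebraMap, ofReal_mul]
  ring

lemma continuous_mellin {α : ℝ} {h : ℝ → ℝ} (hh : MemL1w1 α h) :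
    Continuous fun τ : ℝ ↦ mellin (fun t ↦ (h t : ℂ)) ((α : ℂ) + I * (τ : ℂ)) := by
  simp only [mellin_eq_fourier_logPullbackReal]
  have hF := continuous_fourier_of_integrable (integrable_logPullbackReal hh)
  fun_prop

lemma continuous_logPullbackReal_exp_neg (α : ℝ) :
    Continuous (logPullbackReal α fun t ↦ Real.exp (-t)) := by
  unfold logPullbackReal
  fun_prop

lemma mellin_exp_neg_ne_zero {s : ℂ} (hs : 0 < s.re) :
    mellin (fun t ↦ ((Real.exp (-t) : ℝ) : ℂ)) s ≠ 0 := by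
  rw [← Complex.GammaIntegral_eq_mellin, ← Complex.Gamma_eq_integral hs]
  exact Complex.Gamma_ne_zero_of_re_pos hs

end OneDim

lemma posOrth_eq_pi (n : ℕ) : posOrth n = univ.pi fun _ ↦ Ioi 0 := by
  ext x
  simp [posOrth]

lemma measurableSet_posOrth (n : ℕ) : MeasurableSet (posOrth n) :=
  posOrth_eq_pi n ▸ MeasurableSet.univ_pi fun _ ↦ measurableSet_Ioi

lemma integrableOn_posOrth_prod_rpow_mul_exp {n : ℕ} {c : Fin n → ℝ} (hc : ∀ i, 0 < c i) {b : ℝ}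
    (hb : 0 < b) :
    IntegrableOn (fun x : Fin n → ℝ ↦ ∏ i, x i ^ (c i - 1) * Real.exp (-b * x i)) (posOrth n) := by
  rw [IntegrableOn, posOrth_eq_pi, volume_pi, Measure.restrict_pi_pi]
  refine Integrable.fintype_prod (f := fun i t ↦ t ^ (c i - 1) * Real.exp (-b * t)) fun i ↦ ?_
  simpa only [IntegrableOn, Real.rpow_one] using integrableOn_rpow_mul_exp_neg_mul_rpow (p := 1)
    (by linarith [hc i]) one_pos hb

/-- A cost function on the positive orthant that is merely measurable instead of `C¹`. Only the
level set at height `1` is required to be bounded, since the others are its dilates. -/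
structure IsMeasurableCostFun (n : ℕ) (q : (Fin n → ℝ) → ℝ) : Prop where
  measurable_domRestrict : Measurable ((posOrth n).domRestrict q)
  pos : ∀ x ∈ posOrth n, 0 < q x
  homogeneous : ∀ lam : ℝ, 0 < lam → ∀ x ∈ posOrth n, q (fun i ↦ lam * x i) = lam * q x
  isBounded_levelSet : Bornology.IsBounded {x | x ∈ posOrth n ∧ q x = 1}

lemma IsCostFun.isMeasurableCostFun {n : ℕ} {q : (Fin n → ℝ) → ℝ} (hq : IsCostFun n q) :
    IsMeasurableCostFun n q where
  measurable_domRestrict := (continuousOn_iff_continuous_domRestrict.1 hq.1.continuousOn).measurable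
  pos := hq.2.1
  homogeneous := hq.2.2.1
  isBounded_levelSet := hq.2.2.2 1

namespace IsMeasurableCostFun

variable {n : ℕ} {q : (Fin n → ℝ) → ℝ} {c : Fin n → ℝ} {h : ℝ → ℝ}

lemma nonempty_fin (hq : IsMeasurableCostFun n q) : Nonempty (Fin n) := by
  by_contra hn
  have hn' : IsEmpty (Fin n) := not_nonempty_iff.1 hn
  have hpos := hq.pos 0 fun i ↦ isEmptyElim i
  have hhom := hq.homogeneous 2 two_pos 0 fun i ↦ isEmptyElim i
  rw [Subsingleton.elim (fun i ↦ 2 * (0 : Fin n → ℝ) i) 0] at hhom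
  linarith

lemma exists_coord_le (hq : IsMeasurableCostFun n q) :
    ∃ B > 0, ∀ x ∈ posOrth n, ∀ i, x i ≤ B * q x := by
  obtain ⟨B, hB, hle⟩ := hq.isBounded_levelSet.exists_pos_norm_le
  refine ⟨B, hB, fun x hx i ↦ ?_⟩
  have hqx := hq.pos x hx
  have hmem : (fun i ↦ (q x)⁻¹ * x i) ∈ {x | x ∈ posOrth n ∧ q x = 1} := by
    refine ⟨fun i ↦ mul_pos (inv_pos.2 hqx) (hx i), ?_⟩
    rw [hq.homogeneous _ (inv_pos.2 hqx) x hx, inv_mul_cancel₀ hqx.ne']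
  have hi : (q x)⁻¹ * x i ≤ B :=
    (le_abs_self _).trans ((norm_le_pi_norm _ i).trans (hle _ hmem))
  rwa [inv_mul_le_iff₀ hqx, mul_comm] at hi

lemma exists_exp_neg_le_prod (hq : IsMeasurableCostFun n q) :
    ∃ b > 0, ∀ x ∈ posOrth n, Real.exp (-q x) ≤ ∏ i, Real.exp (-b * x i) := by
  obtain ⟨B, hB, hle⟩ := hq.exists_coord_le
  have hn : 0 < n := Fin.pos_iff_nonempty.2 hq.nonempty_fin
  refine ⟨(n * B)⁻¹, by positivity, fun x hx ↦ ?_⟩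
  have hsum : ∑ i, x i ≤ n * B * q x := by
    simpa [mul_assoc] using Finset.sum_le_sum fun i (_ : i ∈ Finset.univ) ↦ hle x hx i
  rw [← Real.exp_sum, ← Finset.mul_sum, Real.exp_le_exp, neg_mul, neg_le_neg_iff,
    inv_mul_le_iff₀ (by positivity)]
  exact hsum

lemma memL1w_exp_neg (hq : IsMeasurableCostFun n q) (hc : ∀ i, 0 < c i) :
    MemL1w n c fun x ↦ Real.exp (-q x) := by
  obtain ⟨b, hb, hle⟩ := hq.exists_exp_neg_le_prod
  have hqm : AEMeasurable q (volume.restrict (posOrth n)) :=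
    aemeasurable_restrict_of_measurable_subtype (measurableSet_posOrth n) hq.measurable_domRestrict
  refine (integrableOn_posOrth_prod_rpow_mul_exp hc hb).mono' ?_ ?_
  · have hprodm : Measurable fun x : Fin n → ℝ ↦ ∏ i, x i ^ (c i - 1) := by fun_prop
    exact (hqm.neg.exp.mul hprodm.aemeasurable).aestronglyMeasurable
  filter_upwards [ae_restrict_mem (measurableSet_posOrth n)] with x hx
  have hprod : 0 ≤ ∏ i, x i ^ (c i - 1) :=
    Finset.prod_nonneg fun i _ ↦ Real.rpow_nonneg (hx i).le _
  rw [Real.norm_of_nonneg (by positivity), mul_comm, Finset.prod_mul_distrib]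
  exact mul_le_mul_of_nonneg_left (hle x hx) hprod

/-- The height function `-log q` of a cost function in logarithmic coordinates. -/
def logHeight (q : (Fin n → ℝ) → ℝ) (u : EuclideanSpace ℝ (Fin n)) : ℝ :=
  -Real.log (q (expNeg u))

/-- The weight `x^c q(x)^{-α}`, `α = ∑ c i`, in logarithmic coordinates. It is homogeneous of
degree `0` in `x`. -/
def logWeight (q : (Fin n → ℝ) → ℝ) (c : Fin n → ℝ) (u : EuclideanSpace ℝ (Fin n)) : ℝ≥0 :=
  (Real.exp ((∑ i, c i) * logHeight q u - ∑ i, c i * u i)).toNNReal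

lemma logHeight_add_smul (hq : IsMeasurableCostFun n q) (u : EuclideanSpace ℝ (Fin n)) (t : ℝ) :
    logHeight q (u + t • WithLp.toLp 2 1) = logHeight q u + t := by
  have hdilate : expNeg (u + t • WithLp.toLp 2 1) = fun i ↦ Real.exp (-t) * expNeg u i := by
    ext i
    simp [expNeg, Real.exp_add]
  have hpos := hq.pos _ (expNeg_mem_posOrth u)
  rw [logHeight, hdilate, hq.homogeneous _ (Real.exp_pos _) _ (expNeg_mem_posOrth u),
    Real.log_mul (Real.exp_ne_zero _) hpos.ne', Real.log_exp, logHeight]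
  ring

lemma measurable_logHeight (hq : IsMeasurableCostFun n q) : Measurable (logHeight q) :=
  (hq.measurable_domRestrict.comp (measurableEmbedding_expNeg.measurable.subtype_mk
    (h := expNeg_mem_posOrth))).log.neg

lemma isWeightedSlicing (hq : IsMeasurableCostFun n q) (c : Fin n → ℝ) :
    IsWeightedSlicing (logHeight q) (logWeight q c) (WithLp.toLp 2 1) where
  measurable_height := hq.measurable_logHeight
  height_add_smul := hq.logHeight_add_smul
  measurable_weight := by
    have := hq.measurable_logHeight
    unfold logWeight
    fun_prop
  weight_add_smul u t := by
    have hsum : ∑ i, c i * (u + t • WithLp.toLp 2 (1 : Fin n → ℝ)) i =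
        ∑ i, c i * u i + (∑ i, c i) * t := by
      simp [mul_add, Finset.sum_add_distrib, Finset.sum_mul]
    rw [logWeight, hq.logHeight_add_smul, hsum, logWeight]
    ring_nf

lemma ofReal_logPullback_comp (hq : IsMeasurableCostFun n q) (c : Fin n → ℝ) (h : ℝ → ℝ)
    (u : EuclideanSpace ℝ (Fin n)) :
    (logPullback c (fun x ↦ h (q x)) u : ℂ) =
      logWeight q c u • logPullbackReal (∑ i, c i) h (logHeight q u) := by
  have hexp : Real.exp (-logHeight q u) = q (expNeg u) := by
    rw [logHeight, neg_neg, Real.exp_log (hq.pos _ (expNeg_mem_posOrth u))]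
  rw [logPullbackReal, hexp, logWeight, NNReal.smul_def, Real.coe_toNNReal _ (Real.exp_nonneg _),
    smul_smul, ← Real.exp_add, logPullback, real_smul, ← ofReal_mul]
  ring_nf

lemma isFiniteMeasure_weightedSliceMeasure (hq : IsMeasurableCostFun n q) (hc : ∀ i, 0 < c i) :
    IsFiniteMeasure (weightedSliceMeasure (logHeight q) (logWeight q c) (WithLp.toLp 2 1)) := by
  refine (hq.isWeightedSlicing c).isFiniteMeasure
    (continuous_logPullbackReal_exp_neg (∑ i, c i)).aestronglyMeasurable
    (fun s ↦ by simp [logPullbackReal]) ?_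
  simp only [← hq.ofReal_logPullback_comp c fun t ↦ Real.exp (-t)]
  exact (memL1w_iff_integrable_logPullback.1 (hq.memL1w_exp_neg hc)).ofReal

lemma memL1w_comp (hq : IsMeasurableCostFun n q) (hc : ∀ i, 0 < c i)
    (hh : MemL1w1 (∑ i, c i) h) : MemL1w n c fun x ↦ h (q x) := by
  have := hq.isFiniteMeasure_weightedSliceMeasure hc
  have hint := (hq.isWeightedSlicing c).integrable_smul_comp (integrable_logPullbackReal hh)
  simp only [← hq.ofReal_logPullback_comp c h] at hint
  exact memL1w_iff_integrable_logPullback.2 hint.re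

lemma mellinT_comp (hq : IsMeasurableCostFun n q)
    (hh : AEStronglyMeasurable (logPullbackReal (∑ i, c i) h)) (ξ : Fin n → ℝ) :
    mellinT n (fun x ↦ h (q x)) (fun i ↦ (c i : ℂ) + I * (ξ i : ℂ)) =
      mellin (fun t ↦ (h t : ℂ)) (((∑ i, c i : ℝ) : ℂ) + I * ((∑ i, ξ i : ℝ) : ℂ)) *
        ∫ v, 𝐞 (-⟪v, (2 * Real.pi)⁻¹ • WithLp.toLp 2 ξ⟫) • (1 : ℂ)
          ∂weightedSliceMeasure (logHeight q) (logWeight q c) (WithLp.toLp 2 1) := by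
  have hinner : ⟪WithLp.toLp 2 (1 : Fin n → ℝ), (2 * Real.pi)⁻¹ • WithLp.toLp 2 ξ⟫ =
      (∑ i, ξ i) / (2 * Real.pi) := by
    rw [real_inner_smul_right, PiLp.inner_apply]
    simp [div_eq_inv_mul]
  simp only [mellinT_eq_fourier, hq.ofReal_logPullback_comp c h]
  rw [(hq.isWeightedSlicing c).fourier_smul_comp hh, hinner, mellin_eq_fourier_logPullbackReal]

lemma mellinT_comp_eq_zero_iff (hq : IsMeasurableCostFun n q) (hc : ∀ i, 0 < c i)
    (hh : MemL1w1 (∑ i, c i) h) (ξ : Fin n → ℝ) :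
    mellinT n (fun x ↦ h (q x)) (fun i ↦ (c i : ℂ) + I * (ξ i : ℂ)) = 0 ↔
      mellinT n (fun x ↦ Real.exp (-q x)) (fun i ↦ (c i : ℂ) + I * (ξ i : ℂ)) = 0 ∨
        mellin (fun t ↦ (h t : ℂ)) (((∑ i, c i : ℝ) : ℂ) + I * ((∑ i, ξ i : ℝ) : ℂ)) = 0 := by
  have hα : 0 < ∑ i, c i :=
    Finset.sum_pos (fun i _ ↦ hc i) (Finset.univ_nonempty_iff.2 hq.nonempty_fin)
  rw [hq.mellinT_comp (integrable_logPullbackReal hh).aestronglyMeasurable,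
    hq.mellinT_comp (h := fun t ↦ Real.exp (-t))
      (continuous_logPullbackReal_exp_neg _).aestronglyMeasurable,
    mul_eq_zero, mul_eq_zero, or_iff_right (mellin_exp_neg_ne_zero (by simpa using hα)), or_comm]

end IsMeasurableCostFun

lemma sum_apply_surjective (ι : Type*) [Fintype ι] [Nonempty ι] :
    Function.Surjective fun ξ : ι → ℝ ↦ ∑ i, ξ i := by
  classical
  exact fun t ↦ ⟨Pi.single (Classical.arbitrary ι) t, by simp⟩

lemma isOpenMap_sum_apply (ι : Type*) [Fintype ι] [Nonempty ι] :
    IsOpenMap fun ξ : ι → ℝ ↦ ∑ i, ξ i := by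
  have hcoe : ⇑(∑ i : ι, LinearMap.proj (R := ℝ) (φ := fun _ : ι ↦ ℝ) i) = fun ξ ↦ ∑ i, ξ i := by
    ext ξ
    simp
  rw [← hcoe]
  exact LinearMap.isOpenMap_of_finiteDimensional _ (hcoe ▸ sum_apply_surjective ι)

theorem rhq_injective_L1_iff_general
    (n : ℕ) (q : (Fin n → ℝ) → ℝ) (hq : IsMeasurableCostFun n q)
    (c : Fin n → ℝ) (hc : ∀ i, 0 < c i) (α : ℝ) (hα : α = ∑ i, c i)
    (h : ℝ → ℝ) (hh : MemL1w1 α h) :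
    (∀ f : (Fin n → ℝ) → ℝ, MemL1w n (fun i => 1 - c i) f →
        (∀ p ∈ posOrth n, Rhq n q h f p = 0) →
        ∀ᵐ x ∂(volume.restrict (posOrth n)), f x = 0) ↔
      (IsNowhereDense {ξ : Fin n → ℝ |
          mellinT n (fun x => Real.exp (-q x)) (fun i => (c i : ℂ) + I * (ξ i : ℂ)) = 0} ∧
        IsNowhereDense {τ : ℝ |
          mellin (fun t => (h t : ℂ)) ((α : ℂ) + I * (τ : ℂ)) = 0}) := by
  subst hα
  have := hq.nonempty_fin
  have hA : IsClosed {ξ : Fin n → ℝ |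
      mellinT n (fun x ↦ Real.exp (-q x)) (fun i ↦ (c i : ℂ) + I * (ξ i : ℂ)) = 0} :=
    isClosed_eq (continuous_mellinT (hq.memL1w_exp_neg hc)) continuous_const
  have hT : IsClosed {τ : ℝ |
      mellin (fun t ↦ (h t : ℂ)) (((∑ i, c i : ℝ) : ℂ) + I * (τ : ℂ)) = 0} :=
    isClosed_eq (continuous_mellin hh) continuous_const
  rw [hA.isNowhereDense_iff, hT.isNowhereDense_iff,
    ← interior_preimage_eq_empty_iff (isOpenMap_sum_apply (Fin n)) (by fun_prop)
      (sum_apply_surjective (Fin n)), ← interior_union_eq_empty_iff hA]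
  refine (dilation_injective_iff (hq.memL1w_comp hc hh)).trans ?_
  simp only [hq.mellinT_comp_eq_zero_iff hc hh]
  rfl

/-- Theorem: `R^h_q` is injective on `L¹_{I-c}(ℝ^n_+)` iff the zero set of
`(M e^{-q})` on the plane `Re z = c` is nowhere dense and the zero set of `Mh`
on the line `Re s = α` is nowhere dense. -/
theorem rhq_injective_L1_iff
    (n : ℕ) (hn : 2 ≤ n) (q : (Fin n → ℝ) → ℝ) (hq : IsCostFun n q)
    (c : Fin n → ℝ) (hc : ∀ i, 0 < c i) (α : ℝ) (hα : α = ∑ i, c i)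
    (h : ℝ → ℝ) (hh : MemL1w1 α h) :
    (∀ f : (Fin n → ℝ) → ℝ, MemL1w n (fun i => 1 - c i) f →
        (∀ p ∈ posOrth n, Rhq n q h f p = 0) →
        ∀ᵐ x ∂(volume.restrict (posOrth n)), f x = 0) ↔
      (IsNowhereDense {ξ : Fin n → ℝ |
          mellinT n (fun x => Real.exp (-q x)) (fun i => (c i : ℂ) + I * (ξ i : ℂ)) = 0} ∧
        IsNowhereDense {τ : ℝ |
          mellin (fun t => (h t : ℂ)) ((α : ℂ) + I * (τ : ℂ)) = 0}) :=
  rhq_injective_L1_iff_general n q hq.isMeasurableCostFun c hc α hα h hh
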